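/- Sufficient decrease for CBCG with adaptive stepsize: for every k ≥ 0 and every i ∈ {1,…,N}, H(x^k) − H(x^{k+1}) ≥ (β_min/(2N)) ‖A(x^k − x^{k,i−1})‖², where β_min = min{β_1,…,β_N}. -/

import Mathlib

open scoped RealInnerProductSpace BigOperators
noncomputable section

/-- The `i`-th block space `ℝ^{n_i}` (with the Euclidean norm). -/
abbrev Blk {N : ℕ} (nb : Fin N → ℕ) (i : Fin N) : Type := EuclideanSpace ℝ (Fin (nb i))

/-- The full space `ℝ^n`, `n = n_1 + ⋯ + n_N`, seen as the `ℓ²`-product of the blocks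
(this is isometric to `ℝ^n` with the Euclidean norm, respecting the block structure). -/
abbrev FullSpc {N : ℕ} (nb : Fin N → ℕ) : Type := PiLp 2 fun i => Blk nb i

/-- The inclusion of the `i`-th block into the full space, i.e. the linear map
`U_i` represented by the submatrix of the identity matrix corresponding to block `i`
(so that `x_i = U_iᵀ x` is simply `x i`). -/
def blkIncl {N : ℕ} (nb : Fin N → ℕ) (i : Fin N) : Blk nb i →L[ℝ] FullSpc nb :=
  LinearMap.toContinuousLinearMap
    (((WithLp.linearEquiv 2 ℝ (∀ i, Blk nb i)).symm.toLinearMap).comp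
      (LinearMap.single ℝ (fun i => Blk nb i) i))

/-- `∇ f (x) = Aᵀ ∇F(Ax)` for `f = F ∘ A`. -/
def gradFull {N m : ℕ} (nb : Fin N → ℕ) (A : FullSpc nb →L[ℝ] EuclideanSpace ℝ (Fin m))
    (gradF : EuclideanSpace ℝ (Fin m) → EuclideanSpace ℝ (Fin m)) (x : FullSpc nb) :
    FullSpc nb :=
  (ContinuousLinearMap.adjoint A) (gradF (A x))

/-- `∇_i f (x) = U_iᵀ ∇ f(x) = A_iᵀ ∇F(Ax)` where `A_i = A U_i`. -/
def gradBlk {N m : ℕ} (nb : Fin N → ℕ) (A : FullSpc nb →L[ℝ] EuclideanSpace ℝ (Fin m))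
    (gradF : EuclideanSpace ℝ (Fin m) → EuclideanSpace ℝ (Fin m)) (i : Fin N) (x : FullSpc nb) :
    Blk nb i :=
  (ContinuousLinearMap.adjoint (A.comp (blkIncl nb i))) (gradF (A x))

/-! A block step of length `a` towards an oracle point with gap `S` and image direction `d` lowers
`H` by at least `a S - (β_i / 2) a² ‖d‖²`. The adaptive stepsize is at most the maximizer of this
bound, so `a S ≥ β_i a² ‖d‖²` and the decrease is at least `(β_i / 2) ‖a d‖²`. Summing over a sweep
and applying Cauchy–Schwarz to the path `A x^{k,0}, …, A x^{k,i-1}` gives the factor `1 / N`. -/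

section Preliminaries

theorem min_div_one_sq_mul_le {s c : ℝ} (hs : 0 ≤ s) (hc : 0 ≤ c) :
    min (s / c) 1 ^ 2 * c ≤ min (s / c) 1 * s := by
  have h_nonneg : 0 ≤ min (s / c) 1 := le_min (div_nonneg hs hc) zero_le_one
  have h_mul_le : min (s / c) 1 * c ≤ s := mul_le_of_le_div₀ hs hc (min_le_left _ _)
  calc min (s / c) 1 ^ 2 * c = min (s / c) 1 * (min (s / c) 1 * c) := by ring
    _ ≤ min (s / c) 1 * s := mul_le_mul_of_nonneg_left h_mul_le h_nonneg

theorem dist_sq_le_mul_sum_range_dist_sq {M : Type*} [PseudoMetricSpace M] (w : ℕ → M) {n N : ℕ}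
    (hn : n ≤ N) :
    dist (w 0) (w n) ^ 2 ≤ N * ∑ l ∈ Finset.range N, dist (w l) (w (l + 1)) ^ 2 := by
  calc dist (w 0) (w n) ^ 2
      ≤ (∑ l ∈ Finset.range n, dist (w l) (w (l + 1))) ^ 2 := by
        gcongr
        exact dist_le_range_sum_dist w n
    _ ≤ (∑ l ∈ Finset.range N, dist (w l) (w (l + 1))) ^ 2 := by gcongr
    _ ≤ N * ∑ l ∈ Finset.range N, dist (w l) (w (l + 1)) ^ 2 := by
        simpa only [Finset.card_range] using
          sq_sum_le_card_mul_sum_sq (s := Finset.range N) (f := fun l => dist (w l) (w (l + 1)))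

theorem image_add_le_of_norm_fderiv_sub_le {V : Type*} [NormedAddCommGroup V] [NormedSpace ℝ V]
    {F : V → ℝ} {F' : V → StrongDual ℝ V} {u d : V} {b : ℝ}
    (hF : ∀ t ∈ Set.Icc (0 : ℝ) 1, HasFDerivAt F (F' (u + t • d)) (u + t • d))
    (hF' : ∀ t ∈ Set.Icc (0 : ℝ) 1, ‖F' (u + t • d) - F' u‖ ≤ b * ‖t • d‖) :
    F (u + d) ≤ F u + F' u d + b / 2 * ‖d‖ ^ 2 := by
  have h_deriv : ∀ t ∈ Set.Icc (0 : ℝ) 1,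
      HasDerivAt (fun t : ℝ => F (u + t • d)) (F' (u + t • d) d) t := fun t ht =>
    (hF t ht).comp_hasDerivAt t <| by
      simpa only [one_smul, id_eq] using ((hasDerivAt_id t).smul_const d).const_add u
  have h_deriv_majorant : ∀ t : ℝ, HasDerivAt
      (fun t : ℝ => F u + t * F' u d + t ^ 2 * (b / 2 * ‖d‖ ^ 2))
      (F' u d + t * (b * ‖d‖ ^ 2)) t := fun t => by
    have h := (((hasDerivAt_id t).mul_const (F' u d)).const_add (F u)).add
      ((hasDerivAt_pow 2 t).mul_const (b / 2 * ‖d‖ ^ 2))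
    exact h.congr_deriv (by push_cast; ring)
  have h_deriv_le : ∀ t ∈ Set.Ico (0 : ℝ) 1,
      F' (u + t • d) d ≤ F' u d + t * (b * ‖d‖ ^ 2) := fun t ht => by
    have h_sub_le : F' (u + t • d) d - F' u d ≤ t * (b * ‖d‖ ^ 2) := calc
      F' (u + t • d) d - F' u d ≤ ‖F' (u + t • d) - F' u‖ * ‖d‖ :=
        (Real.le_norm_self _).trans ((F' (u + t • d) - F' u).le_opNorm d)
      _ ≤ b * ‖t • d‖ * ‖d‖ := by
        gcongr
        exact hF' t (Set.Ico_subset_Icc_self ht)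
      _ = t * (b * ‖d‖ ^ 2) := by
        rw [norm_smul, Real.norm_of_nonneg ht.1]
        ring
    exact sub_le_iff_le_add'.1 h_sub_le
  have h_le := image_le_of_deriv_right_le_deriv_boundary
    (fun t ht => (h_deriv t ht).continuousAt.continuousWithinAt)
    (fun t ht => (h_deriv t (Set.Ico_subset_Icc_self ht)).hasDerivWithinAt)
    (by simp)
    (fun t _ => (h_deriv_majorant t).continuousAt.continuousWithinAt)
    (fun t _ => (h_deriv_majorant t).hasDerivWithinAt) h_deriv_le
    (Set.right_mem_Icc.2 zero_le_one)
  simpa only [one_smul, one_mul, one_pow] using h_le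

end Preliminaries

section BlockStep

variable {ι : Type*} [DecidableEq ι] {E : ι → Type*} [∀ i, AddCommGroup (E i)]
  [∀ i, Module ℝ (E i)]

/-- The point obtained from `z` by moving its `i`-th block the fraction `a` of the way to `p`. -/
def blockStep (z : ∀ j, E j) (i : ι) (p : E i) (a : ℝ) : ∀ j, E j :=
  z + a • Pi.single i (p - z i)

variable {X : ∀ i, Set (E i)} {z : ∀ j, E j} {i : ι} {p : E i} {a : ℝ}

theorem blockStep_self (z : ∀ j, E j) (i : ι) (p : E i) (a : ℝ) :
    blockStep z i p a i = z i + a • (p - z i) := by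
  simp only [blockStep, Pi.add_apply, Pi.smul_apply, Pi.single_eq_same]

theorem blockStep_of_ne {j : ι} (hj : j ≠ i) : blockStep z i p a j = z j := by
  simp only [blockStep, Pi.add_apply, Pi.smul_apply, Pi.single_eq_of_ne hj, smul_zero, add_zero]

theorem blockStep_mem (hX : Convex ℝ (X i)) (hz : ∀ j, z j ∈ X j) (hp : p ∈ X i)
    (ha : a ∈ Set.Icc (0 : ℝ) 1) (j : ι) : blockStep z i p a j ∈ X j := by
  rcases eq_or_ne j i with rfl | hj
  · simpa only [blockStep_self] using hX.add_smul_sub_mem (hz j) hp ha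
  · simpa only [blockStep_of_ne hj] using hz j

theorem map_blockStep {W : Type*} [AddCommGroup W] [Module ℝ W] (A : (∀ j, E j) →ₗ[ℝ] W)
    (z : ∀ j, E j) (i : ι) (p : E i) (a : ℝ) :
    A (blockStep z i p a) = A z + a • A (Pi.single i (p - z i)) := by
  rw [blockStep, map_add, map_smul]

theorem sum_blockStep_le [Fintype ι] {g : ∀ i, E i → ℝ} (hg : ConvexOn ℝ (X i) (g i))
    (hz : z i ∈ X i) (hp : p ∈ X i) (ha : a ∈ Set.Icc (0 : ℝ) 1) :
    ∑ j, g j (blockStep z i p a j) ≤ ∑ j, g j (z j) + a * (g i p - g i (z i)) := by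
  have h_other : ∑ j ∈ Finset.univ.erase i, g j (blockStep z i p a j)
      = ∑ j ∈ Finset.univ.erase i, g j (z j) :=
    Finset.sum_congr rfl fun j hj => by rw [blockStep_of_ne (Finset.ne_of_mem_erase hj)]
  have h_block : g i (blockStep z i p a i) ≤ (1 - a) * g i (z i) + a * g i p := by
    have h_comb : blockStep z i p a i = (1 - a) • z i + a • p := by
      rw [blockStep_self]
      module
    rw [h_comb]
    exact hg.2 hz hp (sub_nonneg.2 ha.2) ha.1 (sub_add_cancel 1 a)
  rw [← Finset.sum_erase_add _ _ (Finset.mem_univ i), h_other,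
    ← Finset.sum_erase_add _ (fun j => g j (z j)) (Finset.mem_univ i)]
  linarith

end BlockStep

section LinearizedSubproblem

variable {ι : Type*} [DecidableEq ι] {E : ι → Type*} [∀ i, AddCommGroup (E i)]
  [∀ i, Module ℝ (E i)] {W : Type*} [NormedAddCommGroup W] [NormedSpace ℝ W]

/-- The objective `q ↦ ⟨∇_i f(z), q⟩ + g_i(q)` of the `i`-th linear oracle at `z`, where
`f = F ∘ A` and `F'` is the derivative of `F`; thus `⟨∇_i f(z), q⟩ = F'(Az)(A_i q)`. -/
def linModel (A : (∀ j, E j) →ₗ[ℝ] W) (F' : W → StrongDual ℝ W) (g : ∀ i, E i → ℝ)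
    (z : ∀ j, E j) (i : ι) (q : E i) : ℝ :=
  F' (A z) (A (Pi.single i q)) + g i q

/-- `p` is an admissible answer `p_i(z)` of the `i`-th linear oracle over `X_i`. -/
def IsOracleAnswer (A : (∀ j, E j) →ₗ[ℝ] W) (F' : W → StrongDual ℝ W) (g : ∀ i, E i → ℝ)
    (X : ∀ i, Set (E i)) (z : ∀ j, E j) (i : ι) (p : E i) : Prop :=
  p ∈ X i ∧ IsMinOn (linModel A F' g z i) (X i) p

/-- The conditional gradient gap `⟨∇_i f(z), z_i - p⟩ + g_i(z_i) - g_i(p)`, which is `S_i(z)` when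
`p` is an oracle answer at `z`. -/
def blockGap (A : (∀ j, E j) →ₗ[ℝ] W) (F' : W → StrongDual ℝ W) (g : ∀ i, E i → ℝ)
    (z : ∀ j, E j) (i : ι) (p : E i) : ℝ :=
  F' (A z) (A (Pi.single i (z i - p))) + g i (z i) - g i p

/-- The `i`-th block Lipschitz condition, with constant `b`, on the derivative `F'` along `A`: it is
required only for steps in block `i` between feasible points. -/
def IsBlockLipschitz (A : (∀ j, E j) →ₗ[ℝ] W) (F' : W → StrongDual ℝ W) (X : ∀ i, Set (E i))
    (i : ι) (b : ℝ) : Prop :=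
  ∀ z : ∀ j, E j, (∀ j, z j ∈ X j) → ∀ h : E i, (∀ j, (z + Pi.single i h) j ∈ X j) →
    ‖F' (A (z + Pi.single i h)) - F' (A z)‖ ≤ b * ‖A (Pi.single i h)‖

/-- The composite objective `H(z) = F(Az) + Σ_j g_j(z_j)`. -/
def compositeObjective [Fintype ι] (A : (∀ j, E j) →ₗ[ℝ] W) (F : W → ℝ) (g : ∀ i, E i → ℝ)
    (z : ∀ j, E j) : ℝ :=
  F (A z) + ∑ j, g j (z j)

variable {A : (∀ j, E j) →ₗ[ℝ] W} {F : W → ℝ} {F' : W → StrongDual ℝ W} {g : ∀ i, E i → ℝ}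
  {X : ∀ i, Set (E i)} {z : ∀ j, E j} {i : ι} {p q : E i} {a b : ℝ}

theorem blockGap_eq_sub_linModel (A : (∀ j, E j) →ₗ[ℝ] W) (F' : W → StrongDual ℝ W)
    (g : ∀ i, E i → ℝ) (z : ∀ j, E j) (i : ι) (p : E i) :
    blockGap A F' g z i p = linModel A F' g z i (z i) - linModel A F' g z i p := by
  rw [blockGap, linModel, linModel, Pi.single_sub, map_sub, map_sub]
  ring

theorem IsOracleAnswer.blockGap_le (hp : IsOracleAnswer A F' g X z i p) (hq : q ∈ X i) :
    blockGap A F' g z i q ≤ blockGap A F' g z i p := by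
  simpa only [blockGap_eq_sub_linModel] using sub_le_sub_left (hp.2 hq) _

theorem IsOracleAnswer.blockGap_nonneg (hp : IsOracleAnswer A F' g X z i p) (hz : z i ∈ X i) :
    0 ≤ blockGap A F' g z i p := by
  simpa only [blockGap_eq_sub_linModel] using sub_nonneg.2 (hp.2 hz)

theorem smooth_blockStep_le (hF : ∀ z : ∀ j, E j, (∀ j, z j ∈ X j) → HasFDerivAt F (F' (A z)) (A z))
    (hX : Convex ℝ (X i)) (hb : IsBlockLipschitz A F' X i b) (hz : ∀ j, z j ∈ X j) (hp : p ∈ X i)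
    (ha : a ∈ Set.Icc (0 : ℝ) 1) :
    F (A (blockStep z i p a)) ≤ F (A z) - a * F' (A z) (A (Pi.single i (z i - p)))
      + b / 2 * ‖a • A (Pi.single i (p - z i))‖ ^ 2 := by
  set d := A (Pi.single i (p - z i)) with hd
  have h_mem : ∀ t ∈ Set.Icc (0 : ℝ) 1, ∀ j, blockStep z i p (t * a) j ∈ X j := fun t ht =>
    blockStep_mem hX hz hp ⟨mul_nonneg ht.1 ha.1, mul_le_one₀ ht.2 ha.1 ha.2⟩
  have h_map (t : ℝ) : A (blockStep z i p (t * a)) = A z + t • a • d := by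
    rw [map_blockStep, mul_smul]
  have h_single (t : ℝ) :
      blockStep z i p (t * a) = z + Pi.single i ((t * a) • (p - z i)) := by
    rw [blockStep, Pi.single_smul]
  have h_lipschitz : ∀ t ∈ Set.Icc (0 : ℝ) 1,
      ‖F' (A z + t • a • d) - F' (A z)‖ ≤ b * ‖t • a • d‖ := fun t ht => by
    have h := hb z hz ((t * a) • (p - z i)) (h_single t ▸ h_mem t ht)
    rwa [← h_single, h_map, Pi.single_smul, map_smul, mul_smul] at h
  have h_descent := image_add_le_of_norm_fderiv_sub_le
    (fun t ht => h_map t ▸ hF _ (h_mem t ht)) h_lipschitz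
  have h_neg : A (Pi.single i (z i - p)) = -d := by
    rw [hd, ← map_neg, ← Pi.single_neg, neg_sub]
  rw [map_blockStep, h_neg, map_neg, mul_neg, sub_neg_eq_add]
  simpa only [map_smul, smul_eq_mul] using h_descent

theorem compositeObjective_blockStep_le [Fintype ι]
    (hF : ∀ z : ∀ j, E j, (∀ j, z j ∈ X j) → HasFDerivAt F (F' (A z)) (A z))
    (hg : ConvexOn ℝ (X i) (g i)) (hb : IsBlockLipschitz A F' X i b)
    (hz : ∀ j, z j ∈ X j) (hp : p ∈ X i) (ha : a ∈ Set.Icc (0 : ℝ) 1) :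
    compositeObjective A F g (blockStep z i p a) ≤ compositeObjective A F g z
      - a * blockGap A F' g z i p + b / 2 * ‖a • A (Pi.single i (p - z i))‖ ^ 2 := by
  have h_smooth := smooth_blockStep_le hF hg.1 hb hz hp ha
  have h_sum := sum_blockStep_le hg (hz i) hp ha
  rw [compositeObjective, compositeObjective, blockGap]
  linarith

end LinearizedSubproblem

section AdaptiveStepsize

variable {ι : Type*} [DecidableEq ι] {E : ι → Type*} [∀ i, AddCommGroup (E i)]
  [∀ i, Module ℝ (E i)] {W : Type*} [NormedAddCommGroup W] [NormedSpace ℝ W]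

/-- The adaptive stepsize `min {S / (b ‖A_i(p - z_i)‖²), 1}` for a step of block `i` towards `p`,
with `S` the gap at `z` of the oracle answer `o`. The points `o` and `p` may be different
minimizers. If `A_i(p - z_i) = 0`, division by zero makes the stepsize `0`. -/
def adaptiveStepsize (A : (∀ j, E j) →ₗ[ℝ] W) (F' : W → StrongDual ℝ W) (g : ∀ i, E i → ℝ)
    (b : ℝ) (z : ∀ j, E j) (i : ι) (o p : E i) : ℝ :=
  min (blockGap A F' g z i o / (b * ‖A (Pi.single i (p - z i))‖ ^ 2)) 1

variable {A : (∀ j, E j) →ₗ[ℝ] W} {F : W → ℝ} {F' : W → StrongDual ℝ W} {g : ∀ i, E i → ℝ}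
  {X : ∀ i, Set (E i)} {z : ∀ j, E j} {i : ι} {o p : E i} {b : ℝ}

theorem adaptiveStepsize_mem_Icc (hb : 0 ≤ b) (ho : IsOracleAnswer A F' g X z i o)
    (hz : z i ∈ X i) : adaptiveStepsize A F' g b z i o p ∈ Set.Icc (0 : ℝ) 1 :=
  ⟨le_min (div_nonneg (ho.blockGap_nonneg hz) (by positivity)) zero_le_one, min_le_right _ _⟩

theorem adaptiveStepsize_decrease [Fintype ι]
    (hF : ∀ z : ∀ j, E j, (∀ j, z j ∈ X j) → HasFDerivAt F (F' (A z)) (A z))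
    (hg : ConvexOn ℝ (X i) (g i)) (hb : 0 ≤ b) (hLip : IsBlockLipschitz A F' X i b)
    (hz : ∀ j, z j ∈ X j) (ho : IsOracleAnswer A F' g X z i o)
    (hp : IsOracleAnswer A F' g X z i p) :
    b / 2 * ‖A z - A (blockStep z i p (adaptiveStepsize A F' g b z i o p))‖ ^ 2 ≤
      compositeObjective A F g z
        - compositeObjective A F g (blockStep z i p (adaptiveStepsize A F' g b z i o p)) := by
  set a := adaptiveStepsize A F' g b z i o p
  set d := A (Pi.single i (p - z i))
  have ha : a ∈ Set.Icc (0 : ℝ) 1 := adaptiveStepsize_mem_Icc hb ho (hz i)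
  have h_descent := compositeObjective_blockStep_le hF hg hLip hz hp.1 ha
  have h_gap : b * ‖a • d‖ ^ 2 ≤ a * blockGap A F' g z i p := calc
    b * ‖a • d‖ ^ 2 = a ^ 2 * (b * ‖d‖ ^ 2) := by
      rw [norm_smul, Real.norm_of_nonneg ha.1]
      ring
    _ ≤ a * blockGap A F' g z i o :=
      min_div_one_sq_mul_le (ho.blockGap_nonneg (hz i)) (by positivity)
    _ ≤ a * blockGap A F' g z i p := mul_le_mul_of_nonneg_left (hp.blockGap_le ho.1) ha.1
  have h_dist : ‖A z - A (blockStep z i p a)‖ = ‖a • d‖ := by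
    rw [map_blockStep, sub_add_cancel_left, norm_neg]
  rw [h_dist]
  linarith

end AdaptiveStepsize

section Sweep

variable {N : ℕ} {E : Fin N → Type*} [∀ i, AddCommGroup (E i)] [∀ i, Module ℝ (E i)]
  {W : Type*} [NormedAddCommGroup W] [NormedSpace ℝ W]

/-- `y 0, …, y N` are the points `x^{k,0}, …, x^{k,N}` of one CBCG sweep with adaptive stepsizes.
Block `i` moves from `y i` to `y (i + 1)` towards `p i`; `o i z` is the oracle answer `p_i(z)` that
enters `S_i(z)`. As in the method, the denominator of the stepsize involves the block `y 0 i` of the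
starting point. -/
structure IsAdaptiveSweep (A : (∀ j, E j) →ₗ[ℝ] W) (F' : W → StrongDual ℝ W) (g : ∀ i, E i → ℝ)
    (X : ∀ i, Set (E i)) (β : Fin N → ℝ) (o : ∀ i, (∀ j, E j) → E i) (y : ℕ → ∀ j, E j)
    (p : ∀ i, E i) (α : Fin N → ℝ) : Prop where
  isOracleAnswer : ∀ i : Fin N, IsOracleAnswer A F' g X (y i) i (p i)
  step : ∀ i : Fin N, y (i + 1) = blockStep (y i) i (p i) (α i)
  stepsize : ∀ i : Fin N, α i = min (blockGap A F' g (y i) i (o i (y i)) /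
    (β i * ‖A (Pi.single i (p i - y 0 i))‖ ^ 2)) 1

namespace IsAdaptiveSweep

variable {A : (∀ j, E j) →ₗ[ℝ] W} {F : W → ℝ} {F' : W → StrongDual ℝ W} {g : ∀ i, E i → ℝ}
  {X : ∀ i, Set (E i)} {β : Fin N → ℝ} {o : ∀ i, (∀ j, E j) → E i} {y : ℕ → ∀ j, E j}
  {p : ∀ i, E i} {α : Fin N → ℝ}

theorem apply_eq_of_le (h : IsAdaptiveSweep A F' g X β o y p α) {n : ℕ} {i : Fin N}
    (hn : n ≤ i) : y n i = y 0 i := by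
  induction n with
  | zero => rfl
  | succ n ih =>
    have h_ne : i ≠ ⟨n, by omega⟩ := fun h_eq => by
      rw [h_eq] at hn
      exact Nat.not_succ_le_self n hn
    have h_step : y (n + 1) i = y n i := by
      rw [h.step ⟨n, by omega⟩]
      exact blockStep_of_ne h_ne
    exact h_step.trans (ih (by omega))

theorem eq_blockStep (h : IsAdaptiveSweep A F' g X β o y p α) (i : Fin N) :
    y (i + 1) = blockStep (y i) i (p i)
      (adaptiveStepsize A F' g (β i) (y i) i (o i (y i)) (p i)) := by
  rw [h.step i, h.stepsize i, ← h.apply_eq_of_le le_rfl]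
  rfl

theorem mem (h : IsAdaptiveSweep A F' g X β o y p α) (hX : ∀ i, Convex ℝ (X i))
    (hβ : ∀ i, 0 ≤ β i)
    (ho : ∀ (i : Fin N) (z : ∀ j, E j), (∀ j, z j ∈ X j) → IsOracleAnswer A F' g X z i (o i z))
    (h_zero : ∀ j, y 0 j ∈ X j) {n : ℕ} (hn : n ≤ N) : ∀ j, y n j ∈ X j := by
  induction n with
  | zero => exact h_zero
  | succ n ih =>
    let i : Fin N := ⟨n, hn⟩
    have h_prev : ∀ j, y n j ∈ X j := ih (by omega)
    rw [h.eq_blockStep i]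
    exact blockStep_mem (hX i) h_prev (h.isOracleAnswer i).1
      (adaptiveStepsize_mem_Icc (hβ i) (ho i _ h_prev) (h_prev i))

theorem mul_sum_dist_sq_le (h : IsAdaptiveSweep A F' g X β o y p α)
    (hF : ∀ z : ∀ j, E j, (∀ j, z j ∈ X j) → HasFDerivAt F (F' (A z)) (A z))
    (hg : ∀ i, ConvexOn ℝ (X i) (g i)) (hβ : ∀ i, 0 ≤ β i)
    (hLip : ∀ i, IsBlockLipschitz A F' X i (β i))
    (ho : ∀ (i : Fin N) (z : ∀ j, E j), (∀ j, z j ∈ X j) → IsOracleAnswer A F' g X z i (o i z))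
    (h_zero : ∀ j, y 0 j ∈ X j) {b : ℝ} (hb : ∀ i, b ≤ β i) :
    b / 2 * ∑ n ∈ Finset.range N, dist (A (y n)) (A (y (n + 1))) ^ 2 ≤
      compositeObjective A F g (y 0) - compositeObjective A F g (y N) := by
  rw [Finset.mul_sum, ← Finset.sum_range_sub' (fun n => compositeObjective A F g (y n))]
  refine Finset.sum_le_sum fun n hn => ?_
  let i : Fin N := ⟨n, Finset.mem_range.1 hn⟩
  have h_mem : ∀ j, y n j ∈ X j := h.mem (fun i => (hg i).1) hβ ho h_zero i.2.le
  calc b / 2 * dist (A (y n)) (A (y (n + 1))) ^ 2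
      ≤ β i / 2 * ‖A (y n) - A (y (n + 1))‖ ^ 2 := by
        rw [dist_eq_norm]
        gcongr
        exact hb i
    _ ≤ compositeObjective A F g (y n) - compositeObjective A F g (y (n + 1)) := by
        rw [h.eq_blockStep i]
        exact adaptiveStepsize_decrease hF (hg i) (hβ i) (hLip i) h_mem (ho i _ h_mem)
          (h.isOracleAnswer i)

end IsAdaptiveSweep

theorem cbcg_adaptive_sufficient_decrease_general
    {A : (∀ j, E j) →ₗ[ℝ] W} {X : ∀ i, Set (E i)} {g : ∀ i, E i → ℝ}
    (hg : ∀ i, ConvexOn ℝ (X i) (g i)) {F : W → ℝ} {F' : W → StrongDual ℝ W}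
    (hF : ∀ z : ∀ j, E j, (∀ j, z j ∈ X j) → HasFDerivAt F (F' (A z)) (A z))
    {β : Fin N → ℝ} (hβ : ∀ i, 0 < β i) (hLip : ∀ i, IsBlockLipschitz A F' X i (β i))
    {βmin : ℝ} (hβmin : IsLeast (Set.range β) βmin) {o : ∀ i, (∀ j, E j) → E i}
    (ho : ∀ (i : Fin N) (z : ∀ j, E j), (∀ j, z j ∈ X j) → IsOracleAnswer A F' g X z i (o i z))
    {x : ℕ → ∀ j, E j} {y : ℕ → ℕ → ∀ j, E j} {p : ℕ → ∀ i, E i} {α : ℕ → Fin N → ℝ}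
    (hx_zero : ∀ i, x 0 i ∈ X i) (hy_zero : ∀ k, y k 0 = x k) (hx_succ : ∀ k, x (k + 1) = y k N)
    (hsweep : ∀ k, IsAdaptiveSweep A F' g X β o (y k) (p k) (α k)) (k : ℕ) (i : Fin N) :
    βmin / (2 * (N : ℝ)) * ‖A (x k - y k i)‖ ^ 2 ≤
      compositeObjective A F g (x k) - compositeObjective A F g (x (k + 1)) := by
  have h_mem : ∀ k j, x k j ∈ X j := fun k => by
    induction k with
    | zero => exact hx_zero
    | succ k ih =>
      rw [hx_succ]
      exact (hsweep k).mem (fun i => (hg i).1) (fun i => (hβ i).le) ho (hy_zero k ▸ ih) le_rfl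
  have hN : (N : ℝ) ≠ 0 := Nat.cast_ne_zero.2 i.pos.ne'
  have hβmin_nonneg : 0 ≤ βmin := by
    obtain ⟨j, rfl⟩ := hβmin.1
    exact (hβ j).le
  have h_path := dist_sq_le_mul_sum_range_dist_sq (fun n => A (y k n)) i.2.le
  calc βmin / (2 * (N : ℝ)) * ‖A (x k - y k i)‖ ^ 2
      = βmin / (2 * (N : ℝ)) * dist (A (y k 0)) (A (y k i)) ^ 2 := by
        rw [hy_zero, dist_eq_norm, map_sub]
    _ ≤ βmin / (2 * (N : ℝ))
          * (N * ∑ n ∈ Finset.range N, dist (A (y k n)) (A (y k (n + 1))) ^ 2) := by gcongr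
    _ = βmin / 2 * ∑ n ∈ Finset.range N, dist (A (y k n)) (A (y k (n + 1))) ^ 2 := by field_simp
    _ ≤ compositeObjective A F g (x k) - compositeObjective A F g (x (k + 1)) := by
        rw [← hy_zero k, hx_succ]
        exact (hsweep k).mul_sum_dist_sq_le hF hg (fun i => (hβ i).le) hLip ho
          (hy_zero k ▸ h_mem k) fun j => hβmin.2 ⟨j, rfl⟩

end Sweep

theorem inner_gradBlk {N m : ℕ} (nb : Fin N → ℕ) (A : FullSpc nb →L[ℝ] EuclideanSpace ℝ (Fin m))
    (gradF : EuclideanSpace ℝ (Fin m) → EuclideanSpace ℝ (Fin m)) (i : Fin N) (z : FullSpc nb)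
    (q : Blk nb i) : ⟪gradBlk nb A gradF i z, q⟫ = ⟪gradF (A z), A (blkIncl nb i q)⟫ :=
  ContinuousLinearMap.adjoint_inner_left _ _ _

/-- **Sufficient decrease for CBCG with adaptive stepsize**: for every `k ≥ 0` and every block
`i`, `H(x^k) − H(x^{k+1}) ≥ (β_min/(2N)) ‖A(x^k − x^{k,i−1})‖²`, where `β_min = min_i β_i`. -/
theorem cbcg_adaptive_sufficient_decrease
    {N m : ℕ} (hN : 0 < N) (nb : Fin N → ℕ) (hnb : ∀ i, 0 < nb i)
    (A : FullSpc nb →L[ℝ] EuclideanSpace ℝ (Fin m))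
    (Xi : ∀ i, Set (Blk nb i))
    (hXcpt : ∀ i, IsCompact (Xi i)) (hXconv : ∀ i, Convex ℝ (Xi i))
    (hXne : ∀ i, (Xi i).Nonempty)
    (D : Fin N → ℝ) (hD : ∀ i, Metric.diam (Xi i) = D i)
    (g : ∀ i, Blk nb i → ℝ) (hgconv : ∀ i, ConvexOn ℝ (Xi i) (g i))
    (F : EuclideanSpace ℝ (Fin m) → ℝ)
    (hFconv : ConvexOn ℝ Set.univ F)
    (gradF : EuclideanSpace ℝ (Fin m) → EuclideanSpace ℝ (Fin m))
    (hgradF : ∀ x : FullSpc nb, (∀ i, x i ∈ Xi i) → HasGradientAt F (gradF (A x)) (A x))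
    (LF : ℝ)
    (hLF : ∀ x : FullSpc nb, (∀ i, x i ∈ Xi i) → ∀ y : FullSpc nb, (∀ i, y i ∈ Xi i) →
      ‖gradF (A x) - gradF (A y)‖ ≤ LF * ‖A x - A y‖)
    (β : Fin N → ℝ) (hβpos : ∀ i, 0 < β i)
    (hβ : ∀ (i : Fin N) (z : FullSpc nb), (∀ j, z j ∈ Xi j) →
      ∀ h : Blk nb i, (∀ j, (z + blkIncl nb i h) j ∈ Xi j) →
      ‖gradF (A (z + blkIncl nb i h)) - gradF (A z)‖ ≤ β i * ‖A.comp (blkIncl nb i) h‖)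
    (βmin : ℝ) (hβmin : IsLeast (Set.range β) βmin)
    -- blockwise linear-oracle selections `p_i(x) ∈ argmin_{p_i ∈ X_i} {⟨∇_i f(x), p_i⟩ + g_i(p_i)}`
    (piSel : ∀ i : Fin N, FullSpc nb → Blk nb i)
    (hpiSel : ∀ (i : Fin N) (z : FullSpc nb), (∀ j, z j ∈ Xi j) →
      piSel i z ∈ Xi i ∧ ∀ q ∈ Xi i,
        ⟪gradBlk nb A gradF i z, piSel i z⟫ + g i (piSel i z) ≤
          ⟪gradBlk nb A gradF i z, q⟫ + g i q)
    -- the CBCG iterates: `x k` is `x^k` and `y k i` is `x^{k,i}` for `0 ≤ i ≤ N`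
    (x : ℕ → FullSpc nb) (y : ℕ → ℕ → FullSpc nb)
    (pk : ℕ → (i : Fin N) → Blk nb i) (α : ℕ → Fin N → ℝ)
    (hx0 : ∀ i, x 0 i ∈ Xi i)
    (hy0 : ∀ k, y k 0 = x k)
    (hyN : ∀ k, x (k + 1) = y k N)
    (hα01 : ∀ k i, α k i ∈ Set.Icc (0 : ℝ) 1)
    (hpk : ∀ (k : ℕ) (i : Fin N), pk k i ∈ Xi i ∧ ∀ q ∈ Xi i,
      ⟪gradBlk nb A gradF i (y k i.val), pk k i⟫ + g i (pk k i) ≤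
        ⟪gradBlk nb A gradF i (y k i.val), q⟫ + g i q)
    (hupd : ∀ (k : ℕ) (i : Fin N),
      y k (i.val + 1) = y k i.val + α k i • blkIncl nb i (pk k i - y k i.val i))
    -- the adaptive stepsize `α_i^k = min{ S_i(x^{k,i−1}) / (β_i ‖A_i(p_i^k − x_i^k)‖²), 1 }`
    (hαada : ∀ (k : ℕ) (i : Fin N), α k i =
      min ((⟪gradBlk nb A gradF i (y k i.val), y k i.val i - piSel i (y k i.val)⟫ +
          g i (y k i.val i) - g i (piSel i (y k i.val))) /
        (β i * ‖A.comp (blkIncl nb i) (pk k i - x k i)‖ ^ 2)) 1)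
    :
    ∀ (k : ℕ) (i : Fin N),
      βmin / (2 * (N : ℝ)) * ‖A (x k - y k i.val)‖ ^ 2 ≤
        (F (A (x k)) + ∑ j, g j (x k j)) - (F (A (x (k + 1))) + ∑ j, g j (x (k + 1) j)) := by
  simp only [inner_gradBlk, ← hy0] at hpiSel hpk hαada
  exact cbcg_adaptive_sufficient_decrease_general
    (A := A.toLinearMap ∘ₗ (WithLp.linearEquiv 2 ℝ (∀ i, Blk nb i)).symm.toLinearMap)
    (F' := fun w => InnerProductSpace.toDual ℝ _ (gradF w))
    (o := fun i z => piSel i (WithLp.toLp 2 z)) (x := fun k => WithLp.ofLp (x k))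
    (y := fun k n => WithLp.ofLp (y k n)) hgconv (fun z hz => hgradF (WithLp.toLp 2 z) hz)
    hβpos (fun i z hz h hh =>
      ((congrArg norm (map_sub _ _ _).symm).trans (LinearIsometryEquiv.norm_map _ _)).trans_le
        (hβ i (WithLp.toLp 2 z) hz h hh))
    hβmin (fun i z hz => hpiSel i (WithLp.toLp 2 z) hz) hx0
    (fun k => congrArg WithLp.ofLp (hy0 k)) (fun k => congrArg WithLp.ofLp (hyN k))
    (fun k => ⟨hpk k, fun i => congrArg WithLp.ofLp (hupd k i), hαada k⟩)
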